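/- Let n ≥ 0 be an integer, let k be an integer and let k₀, k₁, …, k_n be nonzero integers. Then |∫_{−π}^{π} [cos(β/2) sin(kβ/2)/(2 sin(β/2))] · Π_{j=0}^{n} [sin(k_jβ/2)/(k_j sin(β/2))] dβ| ≤ 10/3. (The integrand extends continuously to β = 0 since each factor sin(mβ/2)/sin(β/2) is bounded by |m|.) -/

import Mathlib

open MeasureTheory

noncomputable def FF (m : ℤ) (β : ℝ) : ℝ :=
  Real.sin (m * β / 2) * Real.cos (β / 2) / Real.sin (β / 2)

theorem abs_sin_nat_aux (n : ℕ) (x : ℝ) : |Real.sin (n * x)| ≤ n * |Real.sin x| := by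
  induction n with
  | zero => simp
  | succ n ih =>
    push_cast
    rw [add_mul, one_mul, Real.sin_add, add_mul, one_mul]
    refine (abs_add_le _ _).trans ?_
    rw [abs_mul, abs_mul]
    have h1 := Real.abs_cos_le_one x
    have h2 := Real.abs_cos_le_one (n * x)
    have h3 := abs_nonneg (Real.sin x)
    have h4 := abs_nonneg (Real.sin (n * x))
    nlinarith

theorem abs_sin_int_aux (m : ℤ) (x : ℝ) : |Real.sin (m * x)| ≤ |(m : ℝ)| * |Real.sin x| := by
  obtain ⟨n, rfl | rfl⟩ := m.eq_nat_or_neg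
  · simpa using abs_sin_nat_aux n x
  · simpa using abs_sin_nat_aux n x

theorem FF_bound (m : ℤ) (β : ℝ) : |FF m β| ≤ |(m : ℝ)| := by
  unfold FF
  rw [abs_div, abs_mul]
  refine div_le_of_le_mul₀ (abs_nonneg _) (abs_nonneg _) ?_
  have h := abs_sin_int_aux m (β / 2)
  rw [← mul_div_assoc] at h
  have h1 := Real.abs_cos_le_one (β / 2)
  have h4 := abs_nonneg (Real.sin (m * β / 2))
  nlinarith

theorem fac_bound (q : ℤ) (β : ℝ) :
    |Real.sin (q * β / 2) / (q * Real.sin (β / 2))| ≤ 1 := by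
  rw [abs_div, abs_mul]
  refine div_le_of_le_mul₀ (by positivity) (by norm_num) ?_
  have h := abs_sin_int_aux q (β / 2)
  rw [← mul_div_assoc] at h
  linarith

theorem FF_meas (m : ℤ) : Measurable (FF m) := by
  unfold FF; fun_prop

theorem FFg_int (m : ℤ) (g : ℝ → ℝ) (hg : Measurable g) (hb : ∀ β, |g β| ≤ 1) (a b : ℝ) :
    IntervalIntegrable (fun β => FF m β * g β) volume a b := by
  refine (intervalIntegrable_const (c := |(m : ℝ)|)).mono_fun
    ((FF_meas m).mul hg).aestronglyMeasurable (Filter.Eventually.of_forall fun β => ?_)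
  simp only [Real.norm_eq_abs, abs_abs, abs_mul]
  have h1 := FF_bound m β
  have h2 := hb β
  have h3 := abs_nonneg (g β)
  have h4 := abs_nonneg (FF m β)
  nlinarith

theorem FF_int (m : ℤ) (a b : ℝ) : IntervalIntegrable (FF m) volume a b := by
  simpa using FFg_int m (fun _ => 1) measurable_const (by simp) a b

noncomputable def TT (m : ℤ) : ℝ := ∫ β in (-Real.pi)..Real.pi, FF m β

theorem TT_neg (m : ℤ) : TT (-m) = - TT m := by
  unfold TT
  rw [← intervalIntegral.integral_neg]
  congr 1; ext β
  unfold FF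
  push_cast
  rw [neg_mul, neg_div, Real.sin_neg]; ring

theorem sin_half_ne {β : ℝ} (h : β ∈ Set.Ioo (-Real.pi) Real.pi) (h0 : β ≠ 0) :
    Real.sin (β / 2) ≠ 0 := by
  intro hs
  have := (Real.sin_eq_zero_iff_of_lt_of_lt (by linarith [h.1, Real.pi_pos])
    (by linarith [h.2, Real.pi_pos])).1 hs
  exact h0 (by linarith)

theorem TT_ae (f h : ℝ → ℝ) (hfh : ∀ β, Real.sin (β / 2) ≠ 0 → f β = h β) :
    ∫ β in (-Real.pi)..Real.pi, f β = ∫ β in (-Real.pi)..Real.pi, h β := by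
  apply intervalIntegral.integral_congr_ae
  have h0 : ∀ᵐ β : ℝ, β ≠ 0 := by simp [ae_iff]
  have h1 : ∀ᵐ β : ℝ, β ≠ Real.pi := by simp [ae_iff]
  filter_upwards [h0, h1] with β hb0 hb1 hb
  rw [Set.uIoc_of_le (by linarith [Real.pi_pos])] at hb
  exact hfh β (sin_half_ne ⟨hb.1, lt_of_le_of_ne hb.2 hb1⟩ hb0)

theorem int_cos (c : ℝ) (hc : c ≠ 0) :
    ∫ β in (-Real.pi)..Real.pi, Real.cos (c * β) = 2 * Real.sin (c * Real.pi) / c := by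
  rw [intervalIntegral.integral_comp_mul_left _ hc, integral_cos]
  simp
  ring

theorem TT_step (m : ℤ) : TT (m + 2) = TT m +
    ((∫ β in (-Real.pi)..Real.pi, Real.cos ((m + 2) / 2 * β)) +
     ∫ β in (-Real.pi)..Real.pi, Real.cos (m / 2 * β)) := by
  have hc : ∀ c : ℝ, IntervalIntegrable (fun β => Real.cos (c * β)) volume (-Real.pi) Real.pi :=
    fun c => Continuous.intervalIntegrable (by fun_prop) _ _
  rw [← sub_eq_iff_eq_add', ← intervalIntegral.integral_add (hc _) (hc _)]
  unfold TT
  rw [← intervalIntegral.integral_sub (FF_int _ _ _) (FF_int _ _ _)]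
  apply TT_ae
  intro β hs
  unfold FF
  have e1 : ((m + 2 : ℤ) : ℝ) * β / 2 = m * β / 2 + β / 2 + β / 2 := by push_cast; ring
  have e2 : ((m : ℝ) + 2) / 2 * β = m * β / 2 + β / 2 + β / 2 := by ring
  have e3 : (m : ℝ) / 2 * β = m * β / 2 := by ring
  rw [e1, e2, e3]
  simp only [Real.sin_add, Real.cos_add]
  field_simp
  have := Real.sin_sq_add_cos_sq (β / 2)
  generalize Real.sin (β / 2) = s at *
  generalize Real.cos (β / 2) = c at *
  have hs2 : s ^ 2 = 1 - c ^ 2 := by linarith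
  have hs3 : s ^ 3 = s * (1 - c ^ 2) := by rw [← hs2]; ring
  ring_nf
  simp only [hs2, hs3]
  ring

theorem TT_zero : TT 0 = 0 := by simp [TT, FF]

theorem TT_one : TT 1 = 4 := by
  have : TT 1 = ∫ β in (-Real.pi)..Real.pi, Real.cos (1 / 2 * β) := by
    apply TT_ae
    intro β hs
    unfold FF
    have e : (1 : ℝ) / 2 * β = β / 2 := by ring
    simp only [Int.cast_one, one_mul, e]
    field_simp
  rw [this, int_cos _ (by norm_num)]
  have e : (1 : ℝ) / 2 * Real.pi = Real.pi / 2 := by ring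
  rw [e, Real.sin_pi_div_two]; norm_num

theorem TT_even (j : ℕ) : TT (2 * (j + 1 : ℕ)) = 2 * Real.pi := by
  induction j with
  | zero =>
    have := TT_step 0
    rw [TT_zero] at this
    simp at this
    simp [this]
    ring
  | succ j ih =>
    have h := TT_step (2 * (j + 1 : ℕ))
    rw [ih, int_cos _ (by push_cast; positivity), int_cos _ (by push_cast; positivity)] at h
    have e1 : (((2 * (j + 1 : ℕ) : ℤ) : ℝ) + 2) / 2 * Real.pi = (j + 2 : ℕ) * Real.pi := by
      push_cast; ring
    have e2 : (((2 * (j + 1 : ℕ) : ℤ) : ℝ)) / 2 * Real.pi = (j + 1 : ℕ) * Real.pi := by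
      push_cast; ring
    rw [e1, e2, Real.sin_nat_mul_pi, Real.sin_nat_mul_pi] at h
    have e3 : (2 * ((j + 1 + 1 : ℕ) : ℤ)) = 2 * (j + 1 : ℕ) + 2 := by push_cast; ring
    rw [e3, h]; simp

theorem sin_half_odd (j : ℕ) : Real.sin ((j + 1 / 2) * Real.pi) = (-1) ^ j := by
  have e : ((j : ℝ) + 1 / 2) * Real.pi = Real.pi / 2 + j * Real.pi := by ring
  rw [e, Real.sin_add_nat_mul_pi]; simp

theorem TT_odd_step (j : ℕ) : TT (2 * (j + 1 : ℕ) + 1) = TT (2 * j + 1) +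
    (-1) ^ j * (8 / ((2 * j + 1) * (2 * j + 3))) := by
  have h := TT_step (2 * j + 1)
  rw [int_cos _ (by push_cast; positivity), int_cos _ (by push_cast; positivity)] at h
  have e1 : (((2 * j + 1 : ℤ) : ℝ) + 2) / 2 = (j + 1 : ℕ) + 1 / 2 := by
    push_cast; ring
  have e2 : (((2 * j + 1 : ℤ) : ℝ)) / 2 = j + 1 / 2 := by
    push_cast; ring
  rw [e1, e2, sin_half_odd, sin_half_odd] at h
  have e3 : (2 * ((j + 1 : ℕ) : ℤ) + 1) = 2 * j + 1 + 2 := by push_cast; ring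
  rw [e3, h, pow_succ]
  push_cast
  have h1 : (j : ℝ) + 1 / 2 ≠ 0 := by positivity
  have h2 : (j : ℝ) + 1 + 1 / 2 ≠ 0 := by positivity
  have h3 : (2 * j + 1 : ℝ) ≠ 0 := by positivity
  have h4 : (2 * j + 3 : ℝ) ≠ 0 := by positivity
  congr 1
  field_simp
  ring

theorem TT_odd_aux (i : ℕ) : 4 ≤ TT (2 * (2 * i : ℕ) + 1) ∧
    TT (2 * (2 * i + 1 : ℕ) + 1) ≤ 20 / 3 := by
  have key : ∀ i : ℕ, TT (2 * (2 * i + 1 : ℕ) + 1) = TT (2 * (2 * i : ℕ) + 1) +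
      8 / ((4 * i + 1) * (4 * i + 3)) := by
    intro i
    have h := TT_odd_step (2 * i)
    rw [h]; push_cast; simp; ring
  have key2 : ∀ i : ℕ, TT (2 * (2 * (i + 1) : ℕ) + 1) = TT (2 * (2 * i + 1 : ℕ) + 1) -
      8 / ((4 * i + 3) * (4 * i + 5)) := by
    intro i
    have h := TT_odd_step (2 * i + 1)
    have e : 2 * (i + 1) = 2 * i + 1 + 1 := by ring
    rw [e, h, pow_succ, pow_mul]; push_cast; simp; ring
  induction i with
  | zero =>
    have := key 0
    simp [TT_one] at this ⊢
    rw [this]; norm_num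
  | succ i ih =>
    have a := key i
    have b := key2 i
    have c := key (i + 1)
    have l1 : (8 : ℝ) / ((4 * i + 3) * (4 * i + 5)) ≤ 8 / ((4 * i + 1) * (4 * i + 3)) := by
      have hi : (0 : ℝ) ≤ i := Nat.cast_nonneg i
      refine div_le_div_of_nonneg_left (by norm_num) (by positivity) ?_
      nlinarith
    have l2 : (8 : ℝ) / ((4 * (i + 1 : ℕ) + 1) * (4 * (i + 1 : ℕ) + 3))
        ≤ 8 / ((4 * i + 3) * (4 * i + 5)) := by
      push_cast
      have hi : (0 : ℝ) ≤ i := Nat.cast_nonneg i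
      refine div_le_div_of_nonneg_left (by norm_num) (by positivity) ?_
      nlinarith
    have ih1 := ih.1
    have ih2 := ih.2
    rw [c, b]
    rw [a] at ih2 ⊢
    generalize (8 : ℝ) / ((4 * i + 3) * (4 * i + 5)) = u at *
    generalize (8 : ℝ) / ((4 * i + 1) * (4 * i + 3)) = v at *
    generalize (8 : ℝ) / ((4 * (i + 1 : ℕ) + 1) * (4 * (i + 1 : ℕ) + 3)) = w at *
    constructor <;> linarith

theorem TT_nat (n : ℕ) : |TT n| ≤ 20 / 3 := by
  obtain ⟨j, rfl | rfl⟩ := n.even_or_odd'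
  · cases j with
    | zero => simp [TT_zero]; norm_num
    | succ j =>
      have := TT_even j
      push_cast at this ⊢
      rw [this, abs_of_pos (by positivity)]
      linarith [Real.pi_lt_d2]
  · obtain ⟨i, rfl | rfl⟩ := j.even_or_odd'
    · have h := TT_odd_aux i
      have s := TT_odd_step (2 * i)
      have p : (0:ℝ) ≤ (-1) ^ (2 * i) * (8 / ((2 * (2 * i : ℕ) + 1) * (2 * (2 * i : ℕ) + 3))) := by
        simp; positivity
      have e : ((2 * (2 * i) + 1 : ℕ) : ℤ) = 2 * (2 * i : ℕ) + 1 := by push_cast; ring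
      rw [e, abs_le]
      constructor <;> linarith
    · have h := TT_odd_aux i
      have s := TT_odd_step (2 * i)
      have p : (0:ℝ) ≤ (-1) ^ (2 * i) * (8 / ((2 * (2 * i : ℕ) + 1) * (2 * (2 * i : ℕ) + 3))) := by
        simp; positivity
      have e : ((2 * (2 * i + 1) + 1 : ℕ) : ℤ) = 2 * (2 * i + 1 : ℕ) + 1 := by push_cast; ring
      rw [e, abs_le]
      constructor <;> linarith

theorem TT_bound (m : ℤ) : |TT m| ≤ 20 / 3 := by
  obtain ⟨n, rfl | rfl⟩ := m.eq_nat_or_neg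
  · exact TT_nat n
  · rw [TT_neg, abs_neg]; exact TT_nat n

theorem sum_sin_aux (m : ℝ) (q : ℕ) (x : ℝ) : Real.sin x * ∑ i ∈ Finset.range q,
    Real.sin ((m + (2 * i - q + 1)) * x) = Real.sin (m * x) * Real.sin (q * x) := by
  have gen : ∀ r : ℕ, Real.sin x * ∑ i ∈ Finset.range r, Real.sin ((m + (2 * i - q + 1)) * x)
      = (Real.cos ((m - q) * x) - Real.cos ((m - q + 2 * r) * x)) / 2 := by
    intro r
    induction r with
    | zero => simp
    | succ r ih =>
      rw [Finset.sum_range_succ, mul_add, ih]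
      have e1 : (m - q + 2 * (r + 1 : ℕ)) * x = (m + (2 * r - q + 1)) * x + x := by
        push_cast; ring
      have e2 : (m - q + 2 * r) * x = (m + (2 * r - q + 1)) * x - x := by ring
      rw [e1, e2, Real.cos_add, Real.cos_sub]; ring
  rw [gen]
  have e1 : (m - q + 2 * q) * x = m * x + q * x := by ring
  have e2 : (m - q) * x = m * x - q * x := by ring
  rw [e1, e2, Real.cos_add, Real.cos_sub]; ring

theorem FF_mul (m : ℤ) (q : ℕ) (β : ℝ) :
    FF m β * (Real.sin (q * β / 2) / (q * Real.sin (β / 2))) =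
      (q : ℝ)⁻¹ * ∑ i ∈ Finset.range q, FF (m + (2 * i - q + 1)) β := by
  unfold FF
  rw [← Finset.sum_div, ← Finset.sum_mul]
  by_cases hs : Real.sin (β / 2) = 0
  · simp [hs]
  have h := sum_sin_aux m q (β / 2)
  have e : ∀ i : ℕ, Real.sin (((m + (2 * i - q + 1) : ℤ) : ℝ) * β / 2) =
      Real.sin (((m : ℝ) + (2 * i - q + 1)) * (β / 2)) := by
    intro i; congr 1; push_cast; ring
  simp only [e]
  rw [← mul_div_assoc, ← mul_div_assoc] at h
  have h' := eq_div_of_mul_eq hs ((mul_comm _ _).trans h)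
  rw [h']
  rcases eq_or_ne (q : ℝ) 0 with hq | hq
  · simp [hq]
  field_simp

theorem fac_natAbs (q : ℤ) (β : ℝ) :
    Real.sin (q * β / 2) / (q * Real.sin (β / 2)) =
    Real.sin ((q.natAbs : ℕ) * β / 2) / ((q.natAbs : ℕ) * Real.sin (β / 2)) := by
  obtain ⟨n, rfl | rfl⟩ := q.eq_nat_or_neg
  · simp
  · simp [neg_div, neg_mul, div_neg]

theorem prod_bound {ι : Type*} (s : Finset ι) (ks : ι → ℤ) (hks : ∀ j, ks j ≠ 0) :
    ∀ m : ℤ, |∫ β in (-Real.pi)..Real.pi, FF m β *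
      ∏ j ∈ s, Real.sin (ks j * β / 2) / (ks j * Real.sin (β / 2))| ≤ 20 / 3 := by
  classical
  induction s using Finset.induction_on with
  | empty => intro m; simpa [TT] using TT_bound m
  | insert a s ha ih =>
    intro m
    set g : ℝ → ℝ := fun β => ∏ j ∈ s, Real.sin (ks j * β / 2) / (ks j * Real.sin (β / 2)) with hg
    have gm : Measurable g := by
      rw [hg]; fun_prop
    have gb : ∀ β, |g β| ≤ 1 := by
      intro β
      rw [hg]; simp only [Finset.abs_prod]
      exact Finset.prod_le_one (fun _ _ => abs_nonneg _) (fun j _ => fac_bound _ _)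
    set q := (ks a).natAbs with hq
    have hq0 : (0 : ℝ) < q := by
      have := Int.natAbs_pos.2 (hks a)
      exact_mod_cast this
    have e : ∀ β, FF m β * ∏ j ∈ insert a s, Real.sin (ks j * β / 2) / (ks j * Real.sin (β / 2))
        = (q : ℝ)⁻¹ * ∑ i ∈ Finset.range q, FF (m + (2 * i - q + 1)) β * g β := by
      intro β
      rw [Finset.prod_insert ha, ← mul_assoc, fac_natAbs, FF_mul, mul_assoc, Finset.sum_mul]
    simp only [e]
    rw [intervalIntegral.integral_const_mul,
      intervalIntegral.integral_finsetSum (fun i _ => FFg_int _ g gm gb _ _), abs_mul,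
      abs_of_pos (inv_pos.2 hq0), inv_mul_le_iff₀ hq0]
    refine (Finset.abs_sum_le_sum_abs _ _).trans ?_
    refine (Finset.sum_le_sum (fun i _ => ih _)).trans ?_
    simp

/-- Lemma 3.1, second bound: for integers `k` and nonzero integers `k₀,…,k_n`,
`|∫_𝕋 (cos(β/2) sin(kβ/2)/(2 sin(β/2))) ∏_{j=0}^n (sin(k_jβ/2)/(k_j sin(β/2))) dβ| ≤ 10/3`. -/
theorem integral_I2_bound (n : ℕ) (k : ℤ) (ks : Fin (n + 1) → ℤ)
    (hks : ∀ j, ks j ≠ 0) :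
    |∫ β in (-Real.pi)..Real.pi,
        (Real.cos (β / 2) * Real.sin (k * β / 2) / (2 * Real.sin (β / 2))) *
          ∏ j : Fin (n + 1), Real.sin (ks j * β / 2) / (ks j * Real.sin (β / 2))| ≤ 10 / 3 := by
  have h := prod_bound Finset.univ ks hks k
  have e : ∀ β : ℝ, (Real.cos (β / 2) * Real.sin (k * β / 2) / (2 * Real.sin (β / 2))) =
      (1 / 2) * FF k β := by
    intro β
    unfold FF
    rw [div_mul_eq_div_div_swap]; ring
  simp only [e, mul_assoc]
  rw [intervalIntegral.integral_const_mul, abs_mul, abs_of_pos (by norm_num)]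
  linarith
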